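/- arXiv:1611.06778 — 2 statements merged into one kernel-verified Lean document; each statement's English description precedes it below -/
import Mathlib

section
/- Let I, J ⊆ ℝ be open intervals, s : I → J a strictly increasing continuous bijection with inverse t, and suppose t is absolutely continuous on J with density g₀ satisfying ∫_K g₀² dλ < ∞ for every compact K ⊆ J. Let μ = g·λ + κ (with κ ⊥ λ) be the Lebesgue decomposition of the Stieltjes measure μ of s, fix e ∈ I, and set s̄(x) := ∫_e^x g(u) du for x ∈ I. Then s̄ is strictly increasing and continuous on I, and its inverse t̄ on J̄ := s̄(I) is absolutely continuous with a density ḡ satisfying, for every compact interval J' ⊆ J̄, ∫_{J'} ḡ(x)² dx = ∫_{s(t̄(J'))} g₀(x)² dx < ∞. -/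
open MeasureTheory Set

/-!
Everything reduces to a compact interval `[c, d] ⊆ I`. The map `s` pushes its Stieltjes measure `μ`
forward to Lebesgue measure, and `t` has density `g₀`, so `λ = (g₀ ∘ s) · μ`. Splitting
`μ = ν + κ` with `ν = g · λ` and `κ ⊥ λ`, the measure `(g₀ ∘ s) · κ` is both dominated by `λ` and
carried by a `λ`-null set, so `g₀ ∘ s = 0` holds `κ`-almost everywhere and `λ = (g₀ ∘ s) · ν ≪ ν`.
The latter makes `s̄` strictly increasing. Since `ν` is the Stieltjes measure of `s̄`, for every `φ`
with `φ 0 = 0` we get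
`∫ φ(g₀(s(t̄ y))) dy = ∫ φ(g₀(s x)) dν = ∫ φ(g₀(s x)) dμ = ∫ φ(g₀ y) dy`
over corresponding intervals. Thus `g₀ ∘ s ∘ t̄` is a density of `t̄` (take `φ = id`) with the
required integral (take `φ = (· ^ 2)`).
-/

open scoped Topology

section Intervals

theorem exists_Icc_mem_nhdsWithin {I : Set ℝ} {x : ℝ} (hx : x ∈ I) :
    ∃ a ∈ I, ∃ b ∈ I, a ≤ x ∧ x ≤ b ∧ Icc a b ∈ 𝓝[I] x := by
  have hleft : ∃ a ∈ I, a ≤ x ∧ Ici a ∈ 𝓝[I] x := by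
    by_cases h : ∃ a ∈ I, a < x
    · obtain ⟨a, ha, hax⟩ := h
      exact ⟨a, ha, hax.le, mem_nhdsWithin_of_mem_nhds (Ici_mem_nhds hax)⟩
    · push Not at h
      exact ⟨x, hx, le_rfl, Filter.mem_of_superset self_mem_nhdsWithin h⟩
  have hright : ∃ b ∈ I, x ≤ b ∧ Iic b ∈ 𝓝[I] x := by
    by_cases h : ∃ b ∈ I, x < b
    · obtain ⟨b, hb, hxb⟩ := h
      exact ⟨b, hb, hxb.le, mem_nhdsWithin_of_mem_nhds (Iic_mem_nhds hxb)⟩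
    · push Not at h
      exact ⟨x, hx, le_rfl, Filter.mem_of_superset self_mem_nhdsWithin h⟩
  obtain ⟨a, ha, hax, hanhds⟩ := hleft
  obtain ⟨b, hb, hxb, hbnhds⟩ := hright
  exact ⟨a, ha, b, hb, hax, hxb, Filter.inter_mem hanhds hbnhds⟩

theorem locallyIntegrableOn_of_forall_integrableOn_Icc {E : Type*} [NormedAddCommGroup E]
    {I : Set ℝ} {f : ℝ → E} {μ : Measure ℝ}
    (h : ∀ a ∈ I, ∀ b ∈ I, a ≤ b → IntegrableOn f (Icc a b) μ) : LocallyIntegrableOn f I μ := by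
  intro x hx
  obtain ⟨a, ha, b, hb, hax, hxb, hnhds⟩ := exists_Icc_mem_nhdsWithin hx
  exact ⟨Icc a b, hnhds, h a ha b hb (hax.trans hxb)⟩

theorem aemeasurable_restrict_Ioc_of_monotoneOn {a b : ℝ} {f : ℝ → ℝ} {μ : Measure ℝ}
    (hf : MonotoneOn f (Icc a b)) : AEMeasurable f (μ.restrict (Ioc a b)) :=
  aemeasurable_restrict_of_monotoneOn measurableSet_Ioc (hf.mono Ioc_subset_Icc_self)

end Intervals

theorem ae_eq_zero_of_withDensity_absolutelyContinuous {α : Type*} [MeasurableSpace α]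
    {κ τ : Measure α} {G : α → ENNReal} (hG : AEMeasurable G κ) (hac : κ.withDensity G ≪ τ)
    (hκ : κ ⟂ₘ τ) : G =ᵐ[κ] 0 :=
  withDensity_eq_zero hG <| Measure.eq_zero_of_absolutelyContinuous_of_mutuallySingular hac <|
    hκ.mono_ac (withDensity_absolutelyContinuous _ _) Measure.AbsolutelyContinuous.rfl

/-- `f` is absolutely continuous on `J` with density `g`, as assumed of `t` and proved for `t̄`.
Local integrability of `g` is required relative to `J`, including at endpoints belonging to `J`. -/
structure HasDensityOn (f g : ℝ → ℝ) (J : Set ℝ) : Prop where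
  locallyIntegrableOn : LocallyIntegrableOn g J
  sub_eq_integral : ∀ x ∈ J, ∀ y ∈ J, x ≤ y → f y - f x = ∫ u in x..y, g u

namespace HasDensityOn

variable {f g : ℝ → ℝ} {J : Set ℝ}

theorem mono (hf : HasDensityOn f g J) {K : Set ℝ} (hKJ : K ⊆ J) : HasDensityOn f g K where
  locallyIntegrableOn := hf.locallyIntegrableOn.mono_set hKJ
  sub_eq_integral x hx y hy := hf.sub_eq_integral x (hKJ hx) y (hKJ hy)

theorem integrableOn_Icc {a b : ℝ} (hf : HasDensityOn f g (Icc a b)) : IntegrableOn g (Icc a b) :=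
  hf.locallyIntegrableOn.integrableOn_isCompact isCompact_Icc

theorem primitive (hJ : J.OrdConnected) (hg : LocallyIntegrableOn g J) {e : ℝ} (he : e ∈ J) :
    HasDensityOn (fun x => ∫ u in e..x, g u) g J where
  locallyIntegrableOn := hg
  sub_eq_integral x hx y hy _ := by
    have hint : ∀ z ∈ J, IntervalIntegrable g volume e z := fun z hz =>
      (hg.integrableOn_compact_subset (hJ.uIcc_subset he hz) isCompact_uIcc).intervalIntegrable
    exact intervalIntegral.integral_interval_sub_left (hint y hy) (hint x hx)

theorem continuousOn (hJ : J.OrdConnected) (hf : HasDensityOn f g J) : ContinuousOn f J := by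
  intro x hx
  obtain ⟨a, ha, b, hb, hax, hxb, hnhds⟩ := exists_Icc_mem_nhdsWithin hx
  have hint : IntegrableOn g (uIcc a b) := by
    rw [uIcc_of_le (hax.trans hxb)]
    exact (hf.mono (hJ.out ha hb)).integrableOn_Icc
  have hcont : ContinuousOn (fun y => f a + ∫ u in a..y, g u) (Icc a b) := by
    rw [← uIcc_of_le (hax.trans hxb)]
    exact continuousOn_const.add (intervalIntegral.continuousOn_primitive_interval hint)
  have hf_eq : EqOn f (fun y => f a + ∫ u in a..y, g u) (Icc a b) := by
    intro y hy
    change f y = f a + ∫ u in a..y, g u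
    rw [← hf.sub_eq_integral a ha y (hJ.out ha hb hy) hy.1]
    ring
  exact (hcont.congr hf_eq x ⟨hax, hxb⟩).mono_of_mem_nhdsWithin hnhds

theorem ae_nonneg_of_monotoneOn {a b : ℝ} (hab : a ≤ b) (hf : HasDensityOn f g (Icc a b))
    (hmono : MonotoneOn f (Icc a b)) : ∀ᵐ x ∂volume.restrict (Ioc a b), 0 ≤ g x := by
  rw [← restrict_Ioo_eq_restrict_Ioc, ae_restrict_iff' measurableSet_Ioo]
  have hint : IntervalIntegrable g volume a b :=
    (intervalIntegrable_iff_integrableOn_Icc_of_le hab).2 hf.integrableOn_Icc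
  have hprim : MonotoneOn (fun x => ∫ u in a..x, g u) (Ioo a b) := by
    intro x hx y hy hxy
    have hx' := Ioo_subset_Icc_self hx
    have hy' := Ioo_subset_Icc_self hy
    change ∫ u in a..x, g u ≤ ∫ u in a..y, g u
    rw [← hf.sub_eq_integral a (left_mem_Icc.2 hab) x hx' hx'.1,
      ← hf.sub_eq_integral a (left_mem_Icc.2 hab) y hy' hy'.1]
    exact sub_le_sub_right (hmono hx' hy' hxy) _
  filter_upwards [hint.ae_hasDerivAt_integral] with x hderiv hx
  have hxab : x ∈ uIcc a b := uIcc_of_le hab ▸ Ioo_subset_Icc_self hx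
  rw [← (hderiv hxab a left_mem_uIcc).deriv, ← derivWithin_of_isOpen isOpen_Ioo hx]
  exact hprim.derivWithin_nonneg

theorem lintegral_Ioc {a b : ℝ} (hab : a ≤ b) (hf : HasDensityOn f g (Icc a b))
    (hg : ∀ᵐ x ∂volume.restrict (Ioc a b), 0 ≤ g x) :
    ∫⁻ x in Ioc a b, ENNReal.ofReal (g x) = ENNReal.ofReal (f b - f a) := by
  rw [hf.sub_eq_integral a (left_mem_Icc.2 hab) b (right_mem_Icc.2 hab) hab,
    intervalIntegral.integral_of_le hab, ofReal_integral_eq_lintegral_ofReal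
      (hf.integrableOn_Icc.mono_set Ioc_subset_Icc_self) hg]

theorem withDensity_Ioc (hJ : J.OrdConnected) (hf : HasDensityOn f g J)
    (hg : ∀ᵐ x ∂volume.restrict J, 0 ≤ g x) {a b : ℝ} (ha : a ∈ J) (hb : b ∈ J) (hab : a ≤ b) :
    (volume.restrict J).withDensity (fun x => ENNReal.ofReal (g x)) (Ioc a b) =
      ENNReal.ofReal (f b - f a) := by
  have hsub : Ioc a b ⊆ J := Ioc_subset_Icc_self.trans (hJ.out ha hb)
  rw [withDensity_apply _ measurableSet_Ioc, Measure.restrict_restrict_of_subset hsub]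
  exact (hf.mono (hJ.out ha hb)).lintegral_Ioc hab (ae_restrict_of_ae_restrict_of_subset hsub hg)

end HasDensityOn

/-- `μ` is the Stieltjes measure of the strictly increasing continuous function `s` on `I`. Nothing
is required of `μ` outside `I`, nor of an atom at a left endpoint of `I`. -/
structure IsStieltjesMeasureOn (μ : Measure ℝ) (s : ℝ → ℝ) (I : Set ℝ) : Prop where
  strictMonoOn : StrictMonoOn s I
  continuousOn : ContinuousOn s I
  measure_Ioc : ∀ x ∈ I, ∀ y ∈ I, x ≤ y → μ (Ioc x y) = ENNReal.ofReal (s y - s x)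

namespace IsStieltjesMeasureOn

variable {I : Set ℝ} {c d : ℝ} {s t k r g₀ : ℝ → ℝ} {μ ν κ : Measure ℝ}

theorem mono {K : Set ℝ} (hμ : IsStieltjesMeasureOn μ s I) (hKI : K ⊆ I) :
    IsStieltjesMeasureOn μ s K where
  strictMonoOn := hμ.strictMonoOn.mono hKI
  continuousOn := hμ.continuousOn.mono hKI
  measure_Ioc x hx y hy := hμ.measure_Ioc x (hKI hx) y (hKI hy)

theorem image_Icc (hI : I.OrdConnected) (hμ : IsStieltjesMeasureOn μ s I) (hc : c ∈ I)
    (hd : d ∈ I) (hcd : c ≤ d) : s '' Icc c d = Icc (s c) (s d) :=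
  (hμ.continuousOn.mono (hI.out hc hd)).image_Icc_of_monotoneOn hcd
    (hμ.strictMonoOn.monotoneOn.mono (hI.out hc hd))

theorem Icc_subset_image (hI : I.OrdConnected) (hμ : IsStieltjesMeasureOn μ s I) (hc : c ∈ I)
    (hd : d ∈ I) (hcd : c ≤ d) : Icc (s c) (s d) ⊆ s '' I := by
  rw [← hμ.image_Icc hI hc hd hcd]
  exact image_mono (hI.out hc hd)

theorem monotoneOn_leftInvOn (hμ : IsStieltjesMeasureOn μ s I) (hts : LeftInvOn t s I) :
    MonotoneOn t (s '' I) := by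
  have hmaps : MapsTo t (s '' I) I := by
    rintro _ ⟨x, hx, rfl⟩
    rwa [hts hx]
  exact Function.monotoneOn_of_rightInvOn_of_mapsTo hμ.strictMonoOn.monotoneOn
    hts.rightInvOn_image hmaps

section Icc

theorem apply_left_le_apply_right (hμ : IsStieltjesMeasureOn μ s (Icc c d)) (hcd : c ≤ d) :
    s c ≤ s d :=
  hμ.strictMonoOn.monotoneOn (left_mem_Icc.2 hcd) (right_mem_Icc.2 hcd) hcd

theorem monotoneOn_leftInvOn_Icc (hμ : IsStieltjesMeasureOn μ s (Icc c d)) (hcd : c ≤ d)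
    (hts : LeftInvOn t s (Icc c d)) : MonotoneOn t (Icc (s c) (s d)) :=
  hμ.image_Icc ordConnected_Icc (left_mem_Icc.2 hcd) (right_mem_Icc.2 hcd) hcd ▸
    hμ.monotoneOn_leftInvOn hts

theorem aemeasurable (hμ : IsStieltjesMeasureOn μ s (Icc c d)) :
    AEMeasurable s (μ.restrict (Ioc c d)) :=
  aemeasurable_restrict_Ioc_of_monotoneOn hμ.strictMonoOn.monotoneOn

theorem aemeasurable_leftInvOn (hμ : IsStieltjesMeasureOn μ s (Icc c d)) (hcd : c ≤ d)
    (hts : LeftInvOn t s (Icc c d)) : AEMeasurable t (volume.restrict (Ioc (s c) (s d))) :=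
  aemeasurable_restrict_Ioc_of_monotoneOn (hμ.monotoneOn_leftInvOn_Icc hcd hts)

theorem ae_nonneg_of_leftInvOn (hμ : IsStieltjesMeasureOn μ s (Icc c d)) (hcd : c ≤ d)
    (hts : LeftInvOn t s (Icc c d)) (ht : HasDensityOn t g₀ (Icc (s c) (s d))) :
    ∀ᵐ y ∂volume.restrict (Ioc (s c) (s d)), 0 ≤ g₀ y :=
  ht.ae_nonneg_of_monotoneOn (hμ.apply_left_le_apply_right hcd)
    (hμ.monotoneOn_leftInvOn_Icc hcd hts)

theorem preimage_Iic_inter_Ioc (hμ : IsStieltjesMeasureOn μ s (Icc c d)) {a x : ℝ}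
    (hx : x ∈ Icc c d) (hsx : s x = max (s c) (min a (s d))) :
    s ⁻¹' Iic a ∩ Ioc c d = Ioc c x := by
  have hcd : c ≤ d := hx.1.trans hx.2
  ext u
  simp only [mem_inter_iff, mem_preimage, mem_Iic, mem_Ioc]
  constructor
  · rintro ⟨hua, hu⟩
    have hu' := Ioc_subset_Icc_self hu
    have hud := hμ.strictMonoOn.monotoneOn hu' (right_mem_Icc.2 hcd) hu.2
    refine ⟨hu.1, (hμ.strictMonoOn.le_iff_le hu' hx).1 ?_⟩
    rw [hsx]
    exact le_max_of_le_right (le_min hua hud)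
  · rintro ⟨hcu, hux⟩
    have hu' : u ∈ Icc c d := ⟨hcu.le, hux.trans hx.2⟩
    have hsu := hμ.strictMonoOn.monotoneOn hu' hx hux
    have hscu := hμ.strictMonoOn (left_mem_Icc.2 hcd) hu' hcu
    rw [hsx, le_max_iff] at hsu
    exact ⟨(hsu.resolve_left hscu.not_ge).trans (min_le_left _ _), hcu, hu'.2⟩

theorem map_restrict_Ioc (hμ : IsStieltjesMeasureOn μ s (Icc c d)) (hcd : c ≤ d) :
    (μ.restrict (Ioc c d)).map s = volume.restrict (Ioc (s c) (s d)) := by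
  refine (Measure.ext_of_Iic _ _ fun a => ?_).symm
  obtain ⟨x, hx, hsx⟩ : max (s c) (min a (s d)) ∈ s '' Icc c d := by
    rw [hμ.image_Icc ordConnected_Icc (left_mem_Icc.2 hcd) (right_mem_Icc.2 hcd) hcd]
    exact ⟨le_max_left _ _, max_le (hμ.apply_left_le_apply_right hcd) (min_le_right _ _)⟩
  have hvolume : volume (Iic a ∩ Ioc (s c) (s d)) = ENNReal.ofReal (s x - s c) := by
    rw [inter_comm, Ioc_inter_Iic, Real.volume_Ioc, hsx, min_comm]
    rcases le_total (s c) (min a (s d)) with h | h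
    · rw [max_eq_right h]
    · rw [max_eq_left h, sub_self, ENNReal.ofReal_zero,
        ENNReal.ofReal_of_nonpos (sub_nonpos.2 h)]
  rw [Measure.restrict_apply measurableSet_Iic, hvolume,
    ← hμ.measure_Ioc c (left_mem_Icc.2 hcd) x hx hx.1, ← hμ.preimage_Iic_inter_Ioc hx hsx,
    Measure.map_apply_of_aemeasurable hμ.aemeasurable measurableSet_Iic,
    Measure.restrict_apply' measurableSet_Ioc]

theorem restrict_Ioc_eq_volume_of_id (hμ : IsStieltjesMeasureOn μ id (Icc c d)) (hcd : c ≤ d) :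
    μ.restrict (Ioc c d) = volume.restrict (Ioc c d) := by
  simpa only [Measure.map_id, id] using hμ.map_restrict_Ioc hcd

theorem map_leftInvOn (hμ : IsStieltjesMeasureOn μ s (Icc c d)) (hcd : c ≤ d)
    (hts : LeftInvOn t s (Icc c d)) :
    (volume.restrict (Ioc (s c) (s d))).map t = μ.restrict (Ioc c d) := by
  have hid : t ∘ s =ᵐ[μ.restrict (Ioc c d)] id := by
    filter_upwards [ae_restrict_mem measurableSet_Ioc] with x hx
    exact hts (Ioc_subset_Icc_self hx)
  have htm := hμ.aemeasurable_leftInvOn hcd hts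
  rw [← hμ.map_restrict_Ioc hcd] at htm ⊢
  rw [AEMeasurable.map_map_of_aemeasurable htm hμ.aemeasurable, Measure.map_congr hid,
    Measure.map_id]

theorem aemeasurable_density_comp (hμ : IsStieltjesMeasureOn μ s (Icc c d)) (hcd : c ≤ d)
    (ht : HasDensityOn t g₀ (Icc (s c) (s d))) :
    AEMeasurable (fun x => g₀ (s x)) (μ.restrict (Ioc c d)) := by
  refine AEMeasurable.comp_aemeasurable (g := g₀) ?_ hμ.aemeasurable
  rw [hμ.map_restrict_Ioc hcd]
  exact (ht.integrableOn_Icc.mono_set Ioc_subset_Icc_self).aemeasurable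

theorem lintegral_density_comp (hμ : IsStieltjesMeasureOn μ s (Icc c d)) (hcd : c ≤ d)
    (hts : LeftInvOn t s (Icc c d)) (ht : HasDensityOn t g₀ (Icc (s c) (s d))) :
    ∫⁻ x in Ioc c d, ENNReal.ofReal (g₀ (s x)) ∂μ = ENNReal.ofReal (d - c) := by
  have hg₀m : AEMeasurable (fun y => ENNReal.ofReal (g₀ y)) ((μ.restrict (Ioc c d)).map s) := by
    rw [hμ.map_restrict_Ioc hcd]
    exact (ht.integrableOn_Icc.mono_set Ioc_subset_Icc_self).aemeasurable.ennreal_ofReal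
  rw [← lintegral_map' hg₀m hμ.aemeasurable, hμ.map_restrict_Ioc hcd,
    ht.lintegral_Ioc (hμ.apply_left_le_apply_right hcd) (hμ.ae_nonneg_of_leftInvOn hcd hts ht),
    hts (right_mem_Icc.2 hcd), hts (left_mem_Icc.2 hcd)]

theorem volume_restrict_Ioc_eq_withDensity (hμ : IsStieltjesMeasureOn μ s (Icc c d))
    (hcd : c ≤ d) (hts : LeftInvOn t s (Icc c d)) (ht : HasDensityOn t g₀ (Icc (s c) (s d))) :
    volume.restrict (Ioc c d) =
      (μ.restrict (Ioc c d)).withDensity fun x => ENNReal.ofReal (g₀ (s x)) := by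
  rw [← restrict_withDensity measurableSet_Ioc]
  refine (restrict_Ioc_eq_volume_of_id
    ⟨strictMonoOn_id, continuousOn_id, fun x hx y hy hxy => ?_⟩ hcd).symm
  have hsub : Icc x y ⊆ Icc c d := Icc_subset_Icc hx.1 hy.2
  have hmono := hμ.strictMonoOn.monotoneOn
  have hsub' : Icc (s x) (s y) ⊆ Icc (s c) (s d) :=
    Icc_subset_Icc (hmono (left_mem_Icc.2 hcd) hx hx.1) (hmono hy (right_mem_Icc.2 hcd) hy.2)
  rw [withDensity_apply _ measurableSet_Ioc]
  exact (hμ.mono hsub).lintegral_density_comp hxy (hts.mono hsub) (ht.mono hsub')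

theorem density_comp_ae_eq_zero (hμ : IsStieltjesMeasureOn (ν + κ) s (Icc c d)) (hcd : c ≤ d)
    (hts : LeftInvOn t s (Icc c d)) (ht : HasDensityOn t g₀ (Icc (s c) (s d)))
    (hκ : κ ⟂ₘ volume.restrict (Ioc c d)) : ∀ᵐ x ∂κ.restrict (Ioc c d), g₀ (s x) = 0 := by
  have hle : κ.restrict (Ioc c d) ≤ (ν + κ).restrict (Ioc c d) :=
    Measure.restrict_mono subset_rfl (Measure.le_add_left le_rfl)
  have hnonneg : ∀ᵐ x ∂(ν + κ).restrict (Ioc c d), 0 ≤ g₀ (s x) := by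
    refine ae_of_ae_map (p := fun y => 0 ≤ g₀ y) hμ.aemeasurable ?_
    rw [hμ.map_restrict_Ioc hcd]
    exact hμ.ae_nonneg_of_leftInvOn hcd hts ht
  have hdominated : (κ.restrict (Ioc c d)).withDensity (fun x => ENNReal.ofReal (g₀ (s x))) ≤
      volume.restrict (Ioc c d) := by
    rw [hμ.volume_restrict_Ioc_eq_withDensity hcd hts ht, Measure.restrict_add,
      withDensity_add_measure]
    exact Measure.le_add_left le_rfl
  have hzero := ae_eq_zero_of_withDensity_absolutelyContinuous
    ((hμ.aemeasurable_density_comp hcd ht).ennreal_ofReal.mono_measure hle)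
    hdominated.absolutelyContinuous (hκ.mono Measure.restrict_le_self le_rfl)
  filter_upwards [hzero, ae_mono hle hnonneg] with x hx0 hx
  exact le_antisymm (ENNReal.ofReal_eq_zero.1 hx0) hx

theorem volume_restrict_Ioc_absolutelyContinuous (hμ : IsStieltjesMeasureOn (ν + κ) s (Icc c d))
    (hcd : c ≤ d) (hts : LeftInvOn t s (Icc c d)) (ht : HasDensityOn t g₀ (Icc (s c) (s d)))
    (hκ : κ ⟂ₘ volume.restrict (Ioc c d)) :
    volume.restrict (Ioc c d) ≪ ν.restrict (Ioc c d) := by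
  have hzero : (fun x => ENNReal.ofReal (g₀ (s x))) =ᵐ[κ.restrict (Ioc c d)] 0 := by
    filter_upwards [hμ.density_comp_ae_eq_zero hcd hts ht hκ] with x hx
    simp only [hx, ENNReal.ofReal_zero, Pi.zero_apply]
  rw [hμ.volume_restrict_Ioc_eq_withDensity hcd hts ht, Measure.restrict_add,
    withDensity_add_measure, withDensity_congr_ae hzero, withDensity_zero, add_zero]
  exact withDensity_absolutelyContinuous _ _

theorem integrableOn_comp_and_setIntegral_comp_eq {E : Type*} [NormedAddCommGroup E]
    [NormedSpace ℝ E] {f : ℝ → E}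
    (hμ : IsStieltjesMeasureOn (ν + κ) s (Icc c d)) (hν : IsStieltjesMeasureOn ν k (Icc c d))
    (hcd : c ≤ d) (hr : LeftInvOn r k (Icc c d)) (hfκ : ∀ᵐ x ∂κ.restrict (Ioc c d), f (s x) = 0)
    (hf : IntegrableOn f (Ioc (s c) (s d))) :
    IntegrableOn (fun y => f (s (r y))) (Ioc (k c) (k d)) ∧
      ∫ y in Ioc (k c) (k d), f (s (r y)) = ∫ y in Ioc (s c) (s d), f y := by
  have hrm := hν.aemeasurable_leftInvOn hcd hr
  rw [IntegrableOn, ← hμ.map_restrict_Ioc hcd] at hf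
  obtain ⟨hfsν, hfsκ⟩ : IntegrableOn (fun x => f (s x)) (Ioc c d) ν ∧
      IntegrableOn (fun x => f (s x)) (Ioc c d) κ :=
    integrableOn_add_measure.1 (hf.comp_aemeasurable hμ.aemeasurable)
  have hfsr : Integrable (fun x => f (s x)) ((volume.restrict (Ioc (k c) (k d))).map r) := by
    rwa [hν.map_leftInvOn hcd hr]
  refine ⟨hfsr.comp_aemeasurable hrm, ?_⟩
  calc ∫ y in Ioc (k c) (k d), f (s (r y))
      = ∫ x in Ioc c d, f (s x) ∂ν := by
        rw [← hν.map_leftInvOn hcd hr, integral_map hrm hfsr.aestronglyMeasurable]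
    _ = ∫ x in Ioc c d, f (s x) ∂(ν + κ) := by
        rw [Measure.restrict_add, integral_add_measure hfsν hfsκ, integral_eq_zero_of_ae hfκ,
          add_zero]
    _ = ∫ y in Ioc (s c) (s d), f y := by
        rw [← hμ.map_restrict_Ioc hcd, integral_map hμ.aemeasurable hf.aestronglyMeasurable]

end Icc

theorem strictMonoOn_of_measure_Ioc (hI : I.OrdConnected) (hμ : IsStieltjesMeasureOn (ν + κ) s I)
    (hts : LeftInvOn t s I) (ht : HasDensityOn t g₀ (s '' I)) (hκ : κ ⟂ₘ volume.restrict I)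
    (hν : ∀ x ∈ I, ∀ y ∈ I, x ≤ y → ν (Ioc x y) = ENNReal.ofReal (k y - k x)) :
    StrictMonoOn k I := by
  intro c hc d hd hcd
  have hsub : Icc c d ⊆ I := hI.out hc hd
  have hac : volume.restrict (Ioc c d) ≪ ν.restrict (Ioc c d) :=
    (hμ.mono hsub).volume_restrict_Ioc_absolutelyContinuous hcd.le (hts.mono hsub)
      (ht.mono (hμ.Icc_subset_image hI hc hd hcd.le))
      (hκ.mono le_rfl (Measure.restrict_mono (Ioc_subset_Icc_self.trans hsub) le_rfl))
  by_contra! hle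
  have hνzero : ν.restrict (Ioc c d) (Ioc c d) = 0 := by
    rw [Measure.restrict_apply_self, hν c hc d hd hcd.le,
      ENNReal.ofReal_of_nonpos (sub_nonpos.2 hle)]
  have hvolume := hac hνzero
  rw [Measure.restrict_apply_self, Real.volume_Ioc, ENNReal.ofReal_eq_zero] at hvolume
  exact hcd.not_ge (sub_nonpos.1 hvolume)

theorem integrableOn_and_setIntegral_density_comp_eq {E : Type*} [NormedAddCommGroup E]
    [NormedSpace ℝ E] (hI : I.OrdConnected) (hμ : IsStieltjesMeasureOn (ν + κ) s I)
    (hν : IsStieltjesMeasureOn ν k I) (hts : LeftInvOn t s I)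
    (ht : HasDensityOn t g₀ (s '' I)) (hκ : κ ⟂ₘ volume.restrict I)
    (hr : LeftInvOn r k I) {φ : ℝ → E} (hφ0 : φ 0 = 0)
    (hφ : LocallyIntegrableOn (fun y => φ (g₀ y)) (s '' I)) (hc : c ∈ I) (hd : d ∈ I)
    (hcd : c ≤ d) :
    IntegrableOn (fun y => φ (g₀ (s (r y)))) (Icc (k c) (k d)) ∧
      ∫ y in Icc (k c) (k d), φ (g₀ (s (r y))) = ∫ y in Icc (s c) (s d), φ (g₀ y) := by
  have hsub : Icc c d ⊆ I := hI.out hc hd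
  have hsub' : Icc (s c) (s d) ⊆ s '' I := hμ.Icc_subset_image hI hc hd hcd
  have hφκ : ∀ᵐ x ∂κ.restrict (Ioc c d), φ (g₀ (s x)) = 0 := by
    filter_upwards [(hμ.mono hsub).density_comp_ae_eq_zero hcd (hts.mono hsub) (ht.mono hsub')
      (hκ.mono le_rfl (Measure.restrict_mono (Ioc_subset_Icc_self.trans hsub) le_rfl))] with x hx
    rw [hx, hφ0]
  rw [integrableOn_Icc_iff_integrableOn_Ioc, integral_Icc_eq_integral_Ioc,
    integral_Icc_eq_integral_Ioc]
  exact (hμ.mono hsub).integrableOn_comp_and_setIntegral_comp_eq (f := fun y => φ (g₀ y))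
    (hν.mono hsub) hcd (hr.mono hsub) hφκ
    ((hφ.integrableOn_compact_subset hsub' isCompact_Icc).mono_set Ioc_subset_Icc_self)

theorem hasDensityOn_leftInvOn (hI : I.OrdConnected) (hμ : IsStieltjesMeasureOn (ν + κ) s I)
    (hν : IsStieltjesMeasureOn ν k I) (hts : LeftInvOn t s I) (ht : HasDensityOn t g₀ (s '' I))
    (hκ : κ ⟂ₘ volume.restrict I) (hr : LeftInvOn r k I) :
    HasDensityOn r (fun y => g₀ (s (r y))) (k '' I) where
  locallyIntegrableOn := by
    apply locallyIntegrableOn_of_forall_integrableOn_Icc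
    rintro _ ⟨c, hc, rfl⟩ _ ⟨d, hd, rfl⟩ hkcd
    have hcd : c ≤ d := (hν.strictMonoOn.le_iff_le hc hd).1 hkcd
    exact (hμ.integrableOn_and_setIntegral_density_comp_eq hI hν hts ht hκ hr (φ := id) rfl
      ht.locallyIntegrableOn hc hd hcd).1
  sub_eq_integral := by
    rintro _ ⟨c, hc, rfl⟩ _ ⟨d, hd, rfl⟩ hkcd
    have hcd : c ≤ d := (hν.strictMonoOn.le_iff_le hc hd).1 hkcd
    have hscd : s c ≤ s d := hμ.strictMonoOn.monotoneOn hc hd hcd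
    calc r (k d) - r (k c) = t (s d) - t (s c) := by rw [hr hd, hr hc, hts hd, hts hc]
      _ = ∫ y in Icc (s c) (s d), g₀ y := by
        rw [ht.sub_eq_integral _ (mem_image_of_mem s hc) _ (mem_image_of_mem s hd) hscd,
          intervalIntegral.integral_of_le hscd, integral_Icc_eq_integral_Ioc]
      _ = ∫ y in Icc (k c) (k d), g₀ (s (r y)) :=
        (hμ.integrableOn_and_setIntegral_density_comp_eq hI hν hts ht hκ hr (φ := id) rfl
          ht.locallyIntegrableOn hc hd hcd).2.symm
      _ = ∫ y in k c..k d, g₀ (s (r y)) := by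
        rw [intervalIntegral.integral_of_le hkcd, integral_Icc_eq_integral_Ioc]

end IsStieltjesMeasureOn

theorem stmt6_general {E : Type*} [NormedAddCommGroup E] [NormedSpace ℝ E] {I : Set ℝ}
    (hI : I.OrdConnected) {s t g₀ sb g : ℝ → ℝ} {κ : Measure ℝ} (hts : LeftInvOn t s I)
    (ht : HasDensityOn t g₀ (s '' I)) (hg : ∀ᵐ x ∂volume.restrict I, 0 ≤ g x)
    (hμ : IsStieltjesMeasureOn
      ((volume.restrict I).withDensity (fun x => ENNReal.ofReal (g x)) + κ) s I)
    (hκ : κ ⟂ₘ volume.restrict I) (hsb : HasDensityOn sb g I) :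
    StrictMonoOn sb I ∧ ContinuousOn sb I ∧ ∀ tb : ℝ → ℝ, LeftInvOn tb sb I →
      HasDensityOn tb (fun y => g₀ (s (tb y))) (sb '' I) ∧
      ∀ φ : ℝ → E, φ 0 = 0 → LocallyIntegrableOn (fun y => φ (g₀ y)) (s '' I) →
        ∀ a b : ℝ, Icc a b ⊆ sb '' I →
          IntegrableOn (fun y => φ (g₀ (s (tb y)))) (Icc a b) ∧
          IntegrableOn (fun y => φ (g₀ y)) (s '' (tb '' Icc a b)) ∧
          ∫ y in Icc a b, φ (g₀ (s (tb y))) = ∫ y in s '' (tb '' Icc a b), φ (g₀ y) := by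
  have hνIoc := fun x hx y hy hxy => hsb.withDensity_Ioc hI hg (a := x) (b := y) hx hy hxy
  have hν : IsStieltjesMeasureOn _ sb I :=
    ⟨hμ.strictMonoOn_of_measure_Ioc hI hts ht hκ hνIoc, hsb.continuousOn hI, hνIoc⟩
  refine ⟨hν.strictMonoOn, hν.continuousOn, fun tb htb =>
    ⟨hμ.hasDensityOn_leftInvOn hI hν hts ht hκ htb, fun φ hφ0 hφ a b hab => ?_⟩⟩
  rcases lt_or_ge b a with hba | hab'
  · simp [Icc_eq_empty_of_lt hba]
  obtain ⟨c, hc, rfl⟩ := hab (left_mem_Icc.2 hab')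
  obtain ⟨d, hd, rfl⟩ := hab (right_mem_Icc.2 hab')
  have hcd : c ≤ d := (hν.strictMonoOn.le_iff_le hc hd).1 hab'
  have himage : s '' (tb '' Icc (sb c) (sb d)) = Icc (s c) (s d) := by
    rw [← hν.image_Icc hI hc hd hcd, (htb.mono (hI.out hc hd)).image_image,
      hμ.image_Icc hI hc hd hcd]
  obtain ⟨hint, heq⟩ :=
    hμ.integrableOn_and_setIntegral_density_comp_eq hI hν hts ht hκ htb hφ0 hφ
      hc hd hcd
  rw [himage]
  exact ⟨hint, hφ.integrableOn_compact_subset (hμ.Icc_subset_image hI hc hd hcd) isCompact_Icc,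
    heq⟩

/-- Let `s : I → J` be a strictly increasing continuous bijection whose inverse
`t` is absolutely continuous with locally square integrable density `g₀`. Let `μ = g·λ + κ`
(with `κ ⊥ λ`) be the Lebesgue decomposition of the Stieltjes measure `μ` of `s`, and set
`s̄(x) := ∫_e^x g`. Then `s̄` is strictly increasing and continuous on `I`, and every inverse
`t̄` of `s̄` on `J̄ := s̄(I)` is absolutely continuous with a density `ḡ` satisfying, for every
compact interval `J' ⊆ J̄`, `∫_{J'} ḡ² dλ = ∫_{s(t̄(J'))} g₀² dλ < ∞`. -/
theorem stmt6 (I J : Set ℝ) (hIopen : IsOpen I) (hIconn : I.OrdConnected)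
    (hJopen : IsOpen J) (hJconn : J.OrdConnected)
    (s t : ℝ → ℝ) (hmono : StrictMonoOn s I) (hcont : ContinuousOn s I)
    (hmaps : Set.MapsTo s I J) (hsurj : Set.SurjOn s I J)
    (hts : ∀ x ∈ I, t (s x) = x) (hst : ∀ y ∈ J, s (t y) = y)
    (g₀ : ℝ → ℝ) (hg₀loc : LocallyIntegrableOn g₀ J volume)
    (hg₀dens : ∀ x ∈ J, ∀ y ∈ J, x ≤ y → t y - t x = ∫ u in x..y, g₀ u)
    (hg₀sq : ∀ K ⊆ J, IsCompact K → IntegrableOn (fun u => (g₀ u) ^ 2) K volume)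
    (μ : Measure ℝ) (hμI : μ Iᶜ = 0)
    (hμ : ∀ x ∈ I, ∀ y ∈ I, x ≤ y → μ (Set.Ioc x y) = ENNReal.ofReal (s y - s x))
    (g : ℝ → ℝ) (hg0 : ∀ x, 0 ≤ g x) (hgloc : LocallyIntegrableOn g I volume)
    (κ : Measure ℝ)
    (hdecomp : μ = (volume.restrict I).withDensity (fun x => ENNReal.ofReal (g x)) + κ)
    (hsing : κ.MutuallySingular (volume.restrict I))
    (e : ℝ) (he : e ∈ I) :
    StrictMonoOn (fun x => ∫ u in e..x, g u) I ∧
    ContinuousOn (fun x => ∫ u in e..x, g u) I ∧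
    (∀ tb : ℝ → ℝ, (∀ x ∈ I, tb (∫ u in e..x, g u) = x) →
      ∃ gb : ℝ → ℝ,
        LocallyIntegrableOn gb ((fun x => ∫ u in e..x, g u) '' I) volume ∧
        (∀ x ∈ (fun x => ∫ u in e..x, g u) '' I, ∀ y ∈ (fun x => ∫ u in e..x, g u) '' I,
          x ≤ y → tb y - tb x = ∫ u in x..y, gb u) ∧
        (∀ a b : ℝ, Set.Icc a b ⊆ (fun x => ∫ u in e..x, g u) '' I →
          IntegrableOn (fun x => (g₀ x) ^ 2) (s '' (tb '' Set.Icc a b)) volume ∧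
          ∫ x in Set.Icc a b, (gb x) ^ 2 = ∫ x in s '' (tb '' Set.Icc a b), (g₀ x) ^ 2)) := by
  obtain rfl : s '' I = J := hsurj.image_eq_of_mapsTo hmaps
  obtain ⟨hsb, hsbc, h⟩ := stmt6_general (E := ℝ) hIconn hts ⟨hg₀loc, hg₀dens⟩ (.of_forall hg0)
    ⟨hmono, hcont, hdecomp ▸ hμ⟩ hsing (.primitive hIconn hgloc he)
  exact ⟨hsb, hsbc, fun tb htb => ⟨_, (h tb htb).1.1, (h tb htb).1.2, fun a b hab => ((h tb htb).2
    (· ^ 2) (zero_pow two_ne_zero) ((locallyIntegrableOn_iff hJopen.isLocallyClosed).2 hg₀sq)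
    a b hab).2⟩⟩
end

section
/- Let c : ℝ → ℝ be a nondecreasing, continuous, bounded function whose Stieltjes measure ν is mutually singular with Lebesgue measure λ, set s(x) := x + c(x) and t := s⁻¹, and let g be any density of the absolutely continuous function t (so t(y) − t(x) = ∫_x^y g(u) du for all x ≤ y). Then for every a < b one has λ((a,b) ∩ {y : g(y) ≠ 0}) ≥ t(b) − t(a) > 0; in particular, the set where every density of t is nonzero meets every nonempty open interval in a set of positive Lebesgue measure. -/
open MeasureTheory Set

/-!
Since `c` is nondecreasing, `s x = x + c x` is strictly increasing and does not contract distances,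
so its inverse `t` is strictly increasing and `1`-Lipschitz. By Lebesgue differentiation a density
`g` of `t` is almost everywhere the derivative of `t`, hence `|g| ≤ 1` almost everywhere, and
`t b - t a = ∫ u in a..b, g u` cannot exceed the measure of the part of `(a, b)` where `g ≠ 0`.
-/

open Function
open scoped NNReal ENNReal

theorem strictMono_of_rightInverse {α β : Type*} [Preorder α] [LinearOrder β] {s : β → α}
    {t : α → β} (hs : Monotone s) (ht : RightInverse t s) : StrictMono t :=
  fun x y hxy ↦ hs.reflect_lt (by rwa [ht x, ht y])

theorem antilipschitzWith_id_add_of_monotone {c : ℝ → ℝ} (hc : Monotone c) :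
    AntilipschitzWith 1 fun x ↦ x + c x := by
  refine .of_le_mul_dist fun x y ↦ ?_
  wlog hxy : x ≤ y generalizing x y
  · simpa only [dist_comm] using this y x (le_of_not_ge hxy)
  have hcxy : c x ≤ c y := hc hxy
  rw [NNReal.coe_one, one_mul, dist_comm x, dist_comm (x + c x), Real.dist_eq, Real.dist_eq,
    abs_of_nonneg (by linarith), abs_of_nonneg (by linarith)]
  linarith

theorem enorm_integral_le_mul_measure_support {α E : Type*} [MeasurableSpace α]
    [NormedAddCommGroup E] [NormedSpace ℝ E] {μ : Measure α} {f : α → E} {K : ℝ≥0∞}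
    (hf : ∀ᵐ x ∂μ, ‖f x‖ₑ ≤ K) : ‖∫ x, f x ∂μ‖ₑ ≤ K * μ (support f) :=
  calc ‖∫ x, f x ∂μ‖ₑ
      ≤ ∫⁻ x, ‖f x‖ₑ ∂μ := enorm_integral_le_lintegral_enorm f
    _ ≤ ∫⁻ x, (support f).indicator (fun _ ↦ K) x ∂μ := by
        refine lintegral_mono_ae (hf.mono fun x hx ↦ ?_)
        by_cases h : f x = 0
        · simp [h]
        · rwa [indicator_of_mem (mem_support.2 h)]
    _ ≤ K * μ (support f) := lintegral_indicator_const_le _ _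

/-- `f` is absolutely continuous on the real line with density `g`. A density is only determined
up to a null set, so it is a parameter rather than a choice made from `f`. -/
structure HasDensity {E : Type*} [NormedAddCommGroup E] [NormedSpace ℝ E] (f g : ℝ → E) :
    Prop where
  locallyIntegrable : LocallyIntegrable g volume
  sub_eq_integral : ∀ x y : ℝ, x ≤ y → f y - f x = ∫ u in x..y, g u

namespace HasDensity

variable {E : Type*} [NormedAddCommGroup E] [NormedSpace ℝ E] [CompleteSpace E] {f g : ℝ → E}

theorem ae_hasDerivAt (h : HasDensity f g) : ∀ᵐ x, HasDerivAt f (g x) x := by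
  have integral_eq : (fun x ↦ ∫ u in (0 : ℝ)..x, g u) = fun x ↦ f x - f 0 := by
    funext x
    rcases le_total 0 x with hx | hx
    · exact (h.sub_eq_integral 0 x hx).symm
    · rw [intervalIntegral.integral_symm, ← h.sub_eq_integral x 0 hx, neg_sub]
  filter_upwards [LocallyIntegrable.ae_hasDerivAt_integral h.locallyIntegrable] with x hx
  have hderiv := hx 0
  rwa [integral_eq, hasDerivAt_sub_const_iff] at hderiv

theorem ae_enorm_le_of_lipschitzWith {K : ℝ≥0} (h : HasDensity f g) (hf : LipschitzWith K f) :
    ∀ᵐ x, ‖g x‖ₑ ≤ K :=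
  h.ae_hasDerivAt.mono fun _ hx ↦ enorm_le_coe.2 (hx.le_of_lipschitz hf)

theorem enorm_sub_le_mul_volume_inter_support {K : ℝ≥0} (h : HasDensity f g)
    (hf : LipschitzWith K f) {a b : ℝ} (hab : a ≤ b) :
    ‖f b - f a‖ₑ ≤ K * volume (Ioo a b ∩ support g) := by
  rw [h.sub_eq_integral a b hab, intervalIntegral.integral_of_le hab, integral_Ioc_eq_integral_Ioo,
    inter_comm, ← Measure.restrict_apply' measurableSet_Ioo]
  exact enorm_integral_le_mul_measure_support <|
    ae_restrict_of_ae (h.ae_enorm_le_of_lipschitzWith hf)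

end HasDensity

theorem stmt12_general {c t g : ℝ → ℝ} (hc : Monotone c) (hst : ∀ y, t y + c (t y) = y)
    (hg : HasDensity t g) {a b : ℝ} (hab : a < b) :
    0 < t b - t a ∧ ENNReal.ofReal (t b - t a) ≤ volume (Ioo a b ∩ {y | g y ≠ 0}) := by
  have t_rightInverse : RightInverse t fun x ↦ x + c x := hst
  have t_strictMono : StrictMono t := strictMono_of_rightInverse (monotone_id.add hc) t_rightInverse
  have t_lipschitz : LipschitzWith 1 t :=
    (antilipschitzWith_id_add_of_monotone hc).to_rightInverse t_rightInverse
  refine ⟨sub_pos.2 (t_strictMono hab), ?_⟩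
  calc ENNReal.ofReal (t b - t a)
      ≤ ‖t b - t a‖ₑ := Real.ofReal_le_enorm _
    _ ≤ (1 : ℝ≥0) * volume (Ioo a b ∩ support g) :=
        hg.enorm_sub_le_mul_volume_inter_support t_lipschitz hab.le
    _ = volume (Ioo a b ∩ {y | g y ≠ 0}) := by rw [ENNReal.coe_one, one_mul, support]

/-- With `c` nondecreasing, continuous, bounded, `ν ⊥ λ` its Stieltjes measure,
`s(x) = x + c(x)`, `t = s⁻¹`, and `g` any density of the absolutely continuous `t`: for every
`a < b`, `λ((a,b) ∩ {g ≠ 0}) ≥ t(b) − t(a) > 0`. -/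
theorem stmt12 (c : ℝ → ℝ) (hmono : Monotone c) (hcont : Continuous c)
    (hbdd : ∃ M : ℝ, ∀ x, |c x| ≤ M)
    (ν : Measure ℝ)
    (hν : ∀ x y : ℝ, x ≤ y → ν (Set.Ioc x y) = ENNReal.ofReal (c y - c x))
    (hsing : ν.MutuallySingular volume)
    (t : ℝ → ℝ) (hts : ∀ x : ℝ, t (x + c x) = x) (hst : ∀ y : ℝ, t y + c (t y) = y) :
    ∀ g : ℝ → ℝ, LocallyIntegrable g volume →
      (∀ x y : ℝ, x ≤ y → t y - t x = ∫ u in x..y, g u) →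
      ∀ a b : ℝ, a < b →
        0 < t b - t a ∧
        ENNReal.ofReal (t b - t a) ≤ volume (Set.Ioo a b ∩ {y : ℝ | g y ≠ 0}) :=
  fun _ hg hdens _ _ hab ↦ stmt12_general hmono hst ⟨hg, hdens⟩ hab
end
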